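/- Let μ be a Borel probability measure on the unit cube [0,1)^d ⊆ ℝ^d which assigns zero mass to the boundary of every dyadic cube. Then for μ-almost every x, limsup_{n→∞} (−log₂ μ(Q_n(x)))/n = limsup_{r→0} log μ(B(x,r))/log r, and liminf_{n→∞} (−log₂ μ(Q_n(x)))/n = liminf_{r→0} log μ(B(x,r))/log r. -/

import Mathlib

open MeasureTheory Filter Metric Set

/-- The lower local dimension of a measure at a point:
`liminf_{r→0} log μ(B(x,r)) / log r`. -/
noncomputable def lowerLocalDim {X : Type*} [MetricSpace X] [MeasurableSpace X]
    (μ : Measure X) (x : X) : EReal :=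
  Filter.liminf (fun r : ℝ =>
    ((Real.log (μ (Metric.ball x r)).toReal / Real.log r : ℝ) : EReal))
    (nhdsWithin 0 (Set.Ioi 0))

/-- The upper local dimension of a measure at a point:
`limsup_{r→0} log μ(B(x,r)) / log r`. -/
noncomputable def upperLocalDim {X : Type*} [MetricSpace X] [MeasurableSpace X]
    (μ : Measure X) (x : X) : EReal :=
  Filter.limsup (fun r : ℝ =>
    ((Real.log (μ (Metric.ball x r)).toReal / Real.log r : ℝ) : EReal))
    (nhdsWithin 0 (Set.Ioi 0))

/-- The half-open dyadic cell of level `n` with index `j`, i.e. `∏ᵢ [jᵢ/2ⁿ, (jᵢ+1)/2ⁿ)`. -/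
def dyadicCell (d n : ℕ) (j : Fin d → ℤ) : Set (EuclideanSpace ℝ (Fin d)) :=
  {y | ∀ i, (j i : ℝ) / 2 ^ n ≤ y i ∧ y i < ((j i : ℝ) + 1) / 2 ^ n}

/-- The index of the level-`n` dyadic cube containing `x`. -/
noncomputable def dyadicIdx (d n : ℕ) (x : EuclideanSpace ℝ (Fin d)) : Fin d → ℤ :=
  fun i => ⌊(2 : ℝ) ^ n * x i⌋

/-- `Q_n(x)`: the (unique) half-open dyadic cube of level `n` containing `x`. -/
noncomputable def Qcube (d n : ℕ) (x : EuclideanSpace ℝ (Fin d)) :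
    Set (EuclideanSpace ℝ (Fin d)) :=
  dyadicCell d n (dyadicIdx d n x)

/-- `Q` is a dyadic cube (of some level) inside the unit cube `[0,1)^d`. -/
def IsDyadicCube (d : ℕ) (Q : Set (EuclideanSpace ℝ (Fin d))) : Prop :=
  ∃ (n : ℕ) (j : Fin d → ℤ), (∀ i, 0 ≤ j i ∧ j i < 2 ^ n) ∧ Q = dyadicCell d n j

/-- The half-open unit cube `[0,1)^d`. -/
def unitCube (d : ℕ) : Set (EuclideanSpace ℝ (Fin d)) := dyadicCell d 0 0

/-!
On the scale `r = 2⁻ᵗ` the two local dimensions compare `−log₂ μ(B(x, 2⁻ⁿ))` with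
`−log₂ μ(Q_n(x))`. Since `Q_{n+d}(x) ⊆ B(x, 2⁻ⁿ)`, the first is at most the second, up to a bounded
shift of `n`. Conversely `B(x, 2⁻ⁿ)` is covered by `3^d` cubes of level `n`, so for finite `μ` a
Markov estimate bounds the mass of the points with `μ(B(x, 2⁻ⁿ)) > (n + 1)² μ(Q_n(x))` by
`3^d μ(ℝᵈ) / (n + 1)²`. By Borel–Cantelli almost every `x` satisfies the opposite inequality for all
large `n`, and the loss `2 log₂ (n + 1)` is `o(n)`. A locally finite `μ` is first restricted to
large balls.
-/

open Asymptotics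
open scoped ENNReal

section Ratios

variable {α : Type*} {F : Filter α} {p q e S T : α → ℝ}

lemma eventually_div_le_of_div_lt (hS : Tendsto S F atTop) (hTS : T ~[F] S) (he : e =o[F] S)
    (hpq : ∀ᶠ a in F, p a ≤ q a + e a) {c' c : ℝ} (hc : c' < c) :
    ∀ᶠ a in F, q a / T a < c' → p a / S a ≤ c := by
  have hT : Tendsto T F atTop := hTS.symm.tendsto_atTop hS
  have herr : (fun a => c' * (T a - S a) + e a) =o[F] S := (hTS.isLittleO.const_mul_left c').add he
  filter_upwards [hpq, hS.eventually_gt_atTop 0, hT.eventually_gt_atTop 0,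
    herr.bound (sub_pos.2 hc)] with a hpq hS hT herr hq
  rw [div_lt_iff₀ hT] at hq
  rw [Real.norm_of_nonneg hS.le] at herr
  have hTS_le : c' * (T a - S a) + e a ≤ (c - c') * S a := (le_abs_self _).trans herr
  rw [div_le_iff₀ hS]
  linarith

lemma limsup_div_le_limsup_div (hS : Tendsto S F atTop) (hTS : T ~[F] S) (he : e =o[F] S)
    (hpq : ∀ᶠ a in F, p a ≤ q a + e a) :
    limsup (fun a => ((p a / S a : ℝ) : EReal)) F ≤
      limsup (fun a => ((q a / T a : ℝ) : EReal)) F := by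
  refine le_of_forall_gt_imp_ge_of_dense fun b hb => ?_
  obtain ⟨c', hqc', hc'b⟩ := EReal.lt_iff_exists_real_btwn.1 hb
  obtain ⟨c, hc'c, hcb⟩ := EReal.lt_iff_exists_real_btwn.1 hc'b
  refine (limsup_le_of_le (by isBoundedDefault) ?_).trans hcb.le
  filter_upwards [eventually_lt_of_limsup_lt hqc',
    eventually_div_le_of_div_lt hS hTS he hpq (EReal.coe_lt_coe_iff.1 hc'c)] with a hq hp
  exact EReal.coe_le_coe_iff.2 (hp (EReal.coe_lt_coe_iff.1 hq))

lemma liminf_div_le_liminf_div (hS : Tendsto S F atTop) (hTS : T ~[F] S) (he : e =o[F] S)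
    (hpq : ∀ᶠ a in F, p a ≤ q a + e a) :
    liminf (fun a => ((p a / S a : ℝ) : EReal)) F ≤
      liminf (fun a => ((q a / T a : ℝ) : EReal)) F := by
  refine le_of_forall_gt_imp_ge_of_dense fun b hb => ?_
  obtain ⟨c', hqc', hc'b⟩ := EReal.lt_iff_exists_real_btwn.1 hb
  obtain ⟨c, hc'c, hcb⟩ := EReal.lt_iff_exists_real_btwn.1 hc'b
  refine (liminf_le_of_frequently_le ?_ (by isBoundedDefault)).trans hcb.le
  refine ((frequently_lt_of_liminf_lt (by isBoundedDefault) hqc').and_eventually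
    (eventually_div_le_of_div_lt hS hTS he hpq (EReal.coe_lt_coe_iff.1 hc'c))).mono ?_
  rintro a ⟨hq, hp⟩
  exact EReal.coe_le_coe_iff.2 (hp (EReal.coe_lt_coe_iff.1 hq))

end Ratios

section Sequences

lemma isEquivalent_natCast_add_const (k : ℕ) :
    (fun n : ℕ => ((n + k : ℕ) : ℝ)) ~[atTop] fun n => (n : ℝ) := by
  simp only [Nat.cast_add]
  exact IsEquivalent.refl.add_isLittleO
    (isLittleO_const_left.2 <|
      .inr (tendsto_norm_atTop_atTop.comp tendsto_natCast_atTop_atTop))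

lemma isLittleO_logb_natCast_add_one_sq (b : ℝ) :
    (fun n : ℕ => Real.logb b (((n : ℝ) + 1) ^ 2)) =o[atTop] fun n => (n : ℝ) := by
  have hlog : (fun n : ℕ => Real.logb b ((n + 1 : ℕ) : ℝ)) =o[atTop] fun n => ((n + 1 : ℕ) : ℝ) :=
    Real.isLittleO_logb_id_atTop.comp_tendsto
      (tendsto_natCast_atTop_atTop.comp (tendsto_add_atTop_nat 1))
  simpa only [Real.logb_pow, Nat.cast_add_one] using
    (hlog.trans_isBigO (isEquivalent_natCast_add_const 1).isBigO).const_mul_left ((2 : ℕ) : ℝ)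

lemma tsum_inv_ofReal_natCast_add_one_sq_ne_top :
    ∑' n : ℕ, (ENNReal.ofReal (((n : ℝ) + 1) ^ 2))⁻¹ ≠ ⊤ := by
  have hsum : Summable fun n : ℕ => (((n : ℝ) + 1) ^ 2)⁻¹ := by
    simpa using (summable_nat_add_iff 1).2 (Real.summable_nat_pow_inv.2 one_lt_two)
  have hinv (n : ℕ) : (ENNReal.ofReal (((n : ℝ) + 1) ^ 2))⁻¹ =
      ENNReal.ofReal (((n : ℝ) + 1) ^ 2)⁻¹ :=
    (ENNReal.ofReal_inv_of_pos (by positivity)).symm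
  simpa only [hinv] using hsum.tsum_ofReal_ne_top

variable {u v e : ℕ → ℝ} {k : ℕ}

lemma limsup_div_natCast_eq_of_le_add (hvu : ∀ᶠ n in atTop, v n ≤ u (n + k))
    (huv : ∀ᶠ n in atTop, u n ≤ v n + e n) (he : e =o[atTop] fun n => (n : ℝ)) :
    limsup (fun n : ℕ => ((u n / n : ℝ) : EReal)) atTop =
      limsup (fun n : ℕ => ((v n / n : ℝ) : EReal)) atTop := by
  refine le_antisymm (limsup_div_le_limsup_div tendsto_natCast_atTop_atTop .refl he huv) ?_
  rw [← limsup_nat_add (fun n : ℕ => ((u n / n : ℝ) : EReal)) k]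
  exact limsup_div_le_limsup_div (e := 0) tendsto_natCast_atTop_atTop
    (isEquivalent_natCast_add_const k) (isLittleO_zero _ _)
    (hvu.mono fun n hn => by simpa using hn)

lemma liminf_div_natCast_eq_of_le_add (hvu : ∀ᶠ n in atTop, v n ≤ u (n + k))
    (huv : ∀ᶠ n in atTop, u n ≤ v n + e n) (he : e =o[atTop] fun n => (n : ℝ)) :
    liminf (fun n : ℕ => ((u n / n : ℝ) : EReal)) atTop =
      liminf (fun n : ℕ => ((v n / n : ℝ) : EReal)) atTop := by
  refine le_antisymm (liminf_div_le_liminf_div tendsto_natCast_atTop_atTop .refl he huv) ?_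
  rw [← liminf_nat_add (fun n : ℕ => ((u n / n : ℝ) : EReal)) k]
  exact liminf_div_le_liminf_div (e := 0) tendsto_natCast_atTop_atTop
    (isEquivalent_natCast_add_const k) (isLittleO_zero _ _)
    (hvu.mono fun n hn => by simpa using hn)

end Sequences

section MonotoneFunctions

variable {g : ℝ → ℝ}

lemma limsup_div_natCast_eq_of_monotone (hg : Monotone g) :
    limsup (fun n : ℕ => ((g n / n : ℝ) : EReal)) atTop =
      limsup (fun t : ℝ => ((g t / t : ℝ) : EReal)) atTop := by
  refine le_antisymm (tendsto_natCast_atTop_atTop.limsup_comp_le_limsup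
    (u := fun t : ℝ => ((g t / t : ℝ) : EReal))) ?_
  calc limsup (fun t : ℝ => ((g t / t : ℝ) : EReal)) atTop
      ≤ limsup (fun t : ℝ => ((g ⌈t⌉₊ / ⌈t⌉₊ : ℝ) : EReal)) atTop :=
        limsup_div_le_limsup_div (e := 0) tendsto_id isEquivalent_nat_ceil
          (isLittleO_zero _ _)
          (.of_forall fun t => by simpa using hg (Nat.le_ceil t))
    _ ≤ limsup (fun n : ℕ => ((g n / n : ℝ) : EReal)) atTop :=
        tendsto_nat_ceil_atTop.limsup_comp_le_limsup
          (u := fun n : ℕ => ((g n / n : ℝ) : EReal))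

lemma liminf_div_natCast_eq_of_monotone (hg : Monotone g) :
    liminf (fun n : ℕ => ((g n / n : ℝ) : EReal)) atTop =
      liminf (fun t : ℝ => ((g t / t : ℝ) : EReal)) atTop := by
  refine le_antisymm ?_ (tendsto_natCast_atTop_atTop.liminf_le_liminf_comp
    (u := fun t : ℝ => ((g t / t : ℝ) : EReal)))
  have hfloor : Tendsto (fun t : ℝ => (⌊t⌋₊ : ℝ)) atTop atTop :=
    tendsto_natCast_atTop_atTop.comp tendsto_nat_floor_atTop
  calc liminf (fun n : ℕ => ((g n / n : ℝ) : EReal)) atTop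
      ≤ liminf (fun t : ℝ => ((g ⌊t⌋₊ / ⌊t⌋₊ : ℝ) : EReal)) atTop :=
        tendsto_nat_floor_atTop.liminf_le_liminf_comp
          (u := fun n : ℕ => ((g n / n : ℝ) : EReal))
    _ ≤ liminf (fun t : ℝ => ((g t / t : ℝ) : EReal)) atTop :=
        liminf_div_le_liminf_div (e := 0) hfloor isEquivalent_nat_floor.symm
          (isLittleO_zero _ _)
          ((eventually_ge_atTop 0).mono fun t ht => by simpa using hg (Nat.floor_le ht))

end MonotoneFunctions

lemma map_rpow_neg_atTop {b : ℝ} (hb : 1 < b) :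
    map (fun t : ℝ => b ^ (-t)) atTop = nhdsWithin 0 (Ioi 0) := by
  have hlog : 0 < Real.log b := Real.log_pos hb
  have hexp : (fun t : ℝ => b ^ (-t)) = Real.exp ∘ Neg.neg ∘ OrderIso.mulLeft₀ _ hlog := by
    ext t
    simp [Real.rpow_def_of_pos (zero_lt_one.trans hb)]
  rw [hexp, ← map_map, ← map_map, OrderIso.map_atTop, map_neg_atTop, Real.map_exp_atBot]

section BallExponent

variable {X : Type*} [PseudoMetricSpace X] [MeasurableSpace X]

/-- `−log₂ μ(B(x, 2⁻ᵗ))`: the mass of a ball on the dyadic logarithmic scale, with a real exponent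
`t` in place of the radius so that it can be compared with `cubeExponent` at `t = n`. -/
noncomputable def ballExponent (μ : Measure X) (x : X) (t : ℝ) : ℝ :=
  -Real.logb 2 (μ.real (ball x (2 ^ (-t))))

lemma ballExponent_div (μ : Measure X) (x : X) (t : ℝ) :
    ballExponent μ x t / t =
      Real.log (μ.real (ball x (2 ^ (-t)))) / Real.log ((2 : ℝ) ^ (-t)) := by
  rw [ballExponent, Real.logb, Real.log_rpow two_pos, ← neg_div, div_div, neg_mul, neg_div,
    div_neg, mul_comm t]

lemma ballExponent_natCast (μ : Measure X) (x : X) (n : ℕ) :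
    ballExponent μ x n = -Real.logb 2 (μ.real (ball x ((2 : ℝ) ^ n)⁻¹)) := by
  rw [ballExponent, Real.rpow_neg two_pos.le, Real.rpow_natCast]

variable [ProperSpace X] {μ : Measure X} [IsFiniteMeasureOnCompacts μ] {x : X}

lemma measureReal_ball_pos (hx : x ∈ μ.support) {r : ℝ} (hr : 0 < r) : 0 < μ.real (ball x r) :=
  ENNReal.toReal_pos ((Measure.mem_support_iff_forall x).1 hx _ (ball_mem_nhds x hr)).ne'
    measure_ball_lt_top.ne

lemma monotone_ballExponent (hx : x ∈ μ.support) : Monotone (ballExponent μ x) := by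
  intro s t hst
  have hball : ball x ((2 : ℝ) ^ (-t)) ⊆ ball x (2 ^ (-s)) :=
    ball_subset_ball (Real.rpow_le_rpow_of_exponent_le one_le_two (neg_le_neg hst))
  exact neg_le_neg (Real.logb_le_logb_of_le one_lt_two
    (measureReal_ball_pos hx (Real.rpow_pos_of_pos two_pos _))
    (measureReal_mono hball measure_ball_lt_top.ne))

end BallExponent

section LocalDimension

variable {X : Type*} [MetricSpace X] [MeasurableSpace X] (μ : Measure X) (x : X)

lemma upperLocalDim_eq_limsup_ballExponent :
    upperLocalDim μ x = limsup (fun t => ((ballExponent μ x t / t : ℝ) : EReal)) atTop := by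
  simp only [upperLocalDim, ← map_rpow_neg_atTop one_lt_two, ballExponent_div]
  rfl

lemma lowerLocalDim_eq_liminf_ballExponent :
    lowerLocalDim μ x = liminf (fun t => ((ballExponent μ x t / t : ℝ) : EReal)) atTop := by
  simp only [lowerLocalDim, ← map_rpow_neg_atTop one_lt_two, ballExponent_div]
  rfl

end LocalDimension

section Fibers

variable {X ι : Type*} [MeasurableSpace X] [Countable ι] (μ : Measure X) (f : X → ι)

lemma measure_setOf_mul_measure_fiber_lt_le (g : ι → ℝ≥0∞) (c : ℝ≥0∞) :
    μ {x | c * μ (f ⁻¹' {f x}) < g (f x)} ≤ c⁻¹ * ∑' j, g j := by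
  set E := {x | c * μ (f ⁻¹' {f x}) < g (f x)}
  have hE : E ⊆ ⋃ j, E ∩ f ⁻¹' {j} := fun x hx => mem_iUnion.2 ⟨f x, hx, rfl⟩
  have hfiber (j : ι) : μ (E ∩ f ⁻¹' {j}) ≤ c⁻¹ * g j := by
    rcases (E ∩ f ⁻¹' {j}).eq_empty_or_nonempty with hempty | ⟨x, hx, rfl⟩
    · simp [hempty]
    refine (measure_mono inter_subset_right).trans ?_
    change c * μ (f ⁻¹' {f x}) < g (f x) at hx
    rcases eq_or_ne c ⊤ with rfl | hc
    · have hnull : μ (f ⁻¹' {f x}) = 0 := by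
        by_contra h
        simp [ENNReal.top_mul h] at hx
      simp [hnull]
    · rw [← ENNReal.div_eq_inv_mul,
        ENNReal.le_div_iff_mul_le (.inr (ne_bot_of_gt hx)) (.inl hc), mul_comm]
      exact hx.le
  calc μ E ≤ ∑' j, μ (E ∩ f ⁻¹' {j}) := (measure_mono hE).trans (measure_iUnion_le _)
    _ ≤ ∑' j, c⁻¹ * g j := ENNReal.tsum_le_tsum hfiber
    _ = c⁻¹ * ∑' j, g j := ENNReal.tsum_mul_left

lemma ae_measure_fiber_ne_zero : ∀ᵐ x ∂μ, μ (f ⁻¹' {f x}) ≠ 0 := by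
  have hnull : μ (⋃ j : {j // μ (f ⁻¹' {j}) = 0}, f ⁻¹' {j.1}) = 0 :=
    measure_iUnion_null fun j => j.2
  refine measure_mono_null (fun x hx => ?_) hnull
  exact mem_iUnion.2 ⟨⟨f x, not_not.1 hx⟩, rfl⟩

end Fibers

section DyadicCubes

variable {d : ℕ}

lemma dyadicCell_eq_preimage (n : ℕ) (j : Fin d → ℤ) :
    dyadicCell d n j = dyadicIdx d n ⁻¹' {j} := by
  ext y
  have hpow : (0 : ℝ) < 2 ^ n := by positivity
  simp only [dyadicCell, mem_ofPred_eq, mem_preimage, mem_singleton_iff, funext_iff, dyadicIdx,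
    Int.floor_eq_iff, div_le_iff₀ hpow, lt_div_iff₀ hpow, mul_comm (y _)]

lemma measurable_dyadicIdx (n : ℕ) : Measurable (dyadicIdx d n) :=
  measurable_pi_lambda _ fun i => Int.measurable_floor.comp (by fun_prop)

lemma tsum_measure_dyadicCell (n : ℕ) (μ : Measure (EuclideanSpace ℝ (Fin d))) :
    ∑' j, μ (dyadicCell d n j) = μ univ := by
  simp only [dyadicCell_eq_preimage]
  have htsum := tsum_measure_preimage_singleton (μ := μ) (f := dyadicIdx d n) countable_univ
    fun j _ => measurable_dyadicIdx n (measurableSet_singleton j)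
  rwa [tsum_univ (fun j => μ (dyadicIdx d n ⁻¹' {j})), preimage_univ] at htsum

lemma ball_subset_iUnion_dyadicCell (n : ℕ) (x : EuclideanSpace ℝ (Fin d)) :
    ball x ((2 : ℝ) ^ n)⁻¹ ⊆
      ⋃ k ∈ Finset.Icc (-1 : Fin d → ℤ) 1, dyadicCell d n (dyadicIdx d n x + k) := by
  intro y hy
  have hscaled (i : Fin d) : |(2 : ℝ) ^ n * y i - 2 ^ n * x i| < 1 := by
    have hcoord : |y i - x i| < ((2 : ℝ) ^ n)⁻¹ :=
      (PiLp.norm_apply_le (y - x) i).trans_lt (mem_ball_iff_norm.1 hy)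
    rwa [← mul_sub, abs_mul, abs_of_pos (by positivity), ← lt_inv_mul_iff₀ (by positivity), mul_one]
  have hidx : dyadicIdx d n y - dyadicIdx d n x ∈ Finset.Icc (-1 : Fin d → ℤ) 1 := by
    simp only [Finset.mem_Icc, Pi.le_def, dyadicIdx, Pi.neg_apply, Pi.one_apply, Pi.sub_apply]
    refine ⟨fun i => ?_, fun i => ?_⟩
    · have hfloor : ⌊(2 : ℝ) ^ n * x i⌋ ≤ ⌊(2 : ℝ) ^ n * y i + 1⌋ :=
        Int.floor_mono (by linarith [(abs_lt.1 (hscaled i)).1])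
      rw [Int.floor_add_one] at hfloor
      linarith
    · have hfloor : ⌊(2 : ℝ) ^ n * y i⌋ ≤ ⌊(2 : ℝ) ^ n * x i + 1⌋ :=
        Int.floor_mono (by linarith [(abs_lt.1 (hscaled i)).2])
      rw [Int.floor_add_one] at hfloor
      linarith
  refine mem_biUnion hidx ?_
  rw [dyadicCell_eq_preimage, add_sub_cancel]
  rfl

lemma Qcube_subset_ball (n : ℕ) (x : EuclideanSpace ℝ (Fin d)) :
    Qcube d n x ⊆ ball x (2 ^ d * ((2 : ℝ) ^ n)⁻¹) := by
  intro y hy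
  rw [Qcube, dyadicCell_eq_preimage] at hy
  have hcoord (i : Fin d) : dist (y i) (x i) ≤ ((2 : ℝ) ^ n)⁻¹ := by
    have hscaled := (Int.abs_sub_lt_one_of_floor_eq_floor (congrFun hy i)).le
    rwa [← mul_sub, abs_mul, abs_of_pos (by positivity), ← le_inv_mul_iff₀ (by positivity),
      mul_one] at hscaled
  have hd : (d : ℝ) < (2 ^ d) ^ 2 := by
    exact_mod_cast Nat.lt_two_pow_self.trans_le (Nat.le_self_pow two_ne_zero _)
  rw [mem_ball, EuclideanSpace.dist_eq, Real.sqrt_lt' (by positivity)]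
  calc ∑ i, dist (y i) (x i) ^ 2
      ≤ ∑ _i : Fin d, (((2 : ℝ) ^ n)⁻¹) ^ 2 := by gcongr with i; exact hcoord i
    _ = d * (((2 : ℝ) ^ n)⁻¹) ^ 2 := by simp
    _ < (2 ^ d) ^ 2 * (((2 : ℝ) ^ n)⁻¹) ^ 2 := by gcongr
    _ = (2 ^ d * ((2 : ℝ) ^ n)⁻¹) ^ 2 := (mul_pow _ _ _).symm

lemma Qcube_add_subset_ball (n : ℕ) (x : EuclideanSpace ℝ (Fin d)) :
    Qcube d (n + d) x ⊆ ball x ((2 : ℝ) ^ n)⁻¹ := by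
  refine (Qcube_subset_ball (n + d) x).trans_eq ?_
  rw [pow_add, mul_inv, mul_left_comm, mul_inv_cancel₀ (by positivity), mul_one]

end DyadicCubes

section CubesVersusBalls

variable {d : ℕ} (μ : Measure (EuclideanSpace ℝ (Fin d)))

lemma ae_measure_Qcube_ne_zero : ∀ᵐ x ∂μ, ∀ n, μ (Qcube d n x) ≠ 0 := by
  simp only [Qcube, dyadicCell_eq_preimage]
  exact ae_all_iff.2 fun n => ae_measure_fiber_ne_zero μ (dyadicIdx d n)

lemma tsum_sum_measure_dyadicCell_add (n : ℕ) (s : Finset (Fin d → ℤ)) :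
    ∑' j, ∑ k ∈ s, μ (dyadicCell d n (j + k)) = s.card * μ univ := by
  have hshift (k : Fin d → ℤ) : ∑' j, μ (dyadicCell d n (j + k)) = μ univ :=
    ((Equiv.addRight k).tsum_eq fun j => μ (dyadicCell d n j)).trans (tsum_measure_dyadicCell n μ)
  rw [Summable.tsum_finsetSum fun _ _ => ENNReal.summable]
  simp [hshift]

lemma measure_setOf_mul_measure_Qcube_lt_measure_ball_le (n : ℕ) (c : ℝ≥0∞) :
    μ {x | c * μ (Qcube d n x) < μ (ball x ((2 : ℝ) ^ n)⁻¹)} ≤ c⁻¹ * (3 ^ d * μ univ) := by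
  set s : Finset (Fin d → ℤ) := Finset.Icc (-1) 1
  have hcard : s.card = 3 ^ d := by simp [s, Pi.card_Icc]
  have hball (x : EuclideanSpace ℝ (Fin d)) : μ (ball x ((2 : ℝ) ^ n)⁻¹) ≤
      ∑ k ∈ s, μ (dyadicCell d n (dyadicIdx d n x + k)) :=
    (measure_mono (ball_subset_iUnion_dyadicCell n x)).trans (measure_biUnion_finset_le _ _)
  calc μ {x | c * μ (Qcube d n x) < μ (ball x ((2 : ℝ) ^ n)⁻¹)}
      ≤ μ {x | c * μ (dyadicIdx d n ⁻¹' {dyadicIdx d n x}) <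
          ∑ k ∈ s, μ (dyadicCell d n (dyadicIdx d n x + k))} := by
        simp only [Qcube, dyadicCell_eq_preimage n (dyadicIdx d n _)]
        exact measure_mono fun x hx => lt_of_lt_of_le hx (hball x)
    _ ≤ c⁻¹ * ∑' j, ∑ k ∈ s, μ (dyadicCell d n (j + k)) :=
        measure_setOf_mul_measure_fiber_lt_le μ (dyadicIdx d n) _ c
    _ = c⁻¹ * (3 ^ d * μ univ) := by
        rw [tsum_sum_measure_dyadicCell_add, hcard, Nat.cast_pow, Nat.cast_ofNat]

lemma ae_eventually_measure_ball_le_of_isFiniteMeasure [IsFiniteMeasure μ] {c : ℕ → ℝ≥0∞}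
    (hc : ∑' n, (c n)⁻¹ ≠ ⊤) :
    ∀ᵐ x ∂μ, ∀ᶠ n in atTop, μ (ball x ((2 : ℝ) ^ n)⁻¹) ≤ c n * μ (Qcube d n x) := by
  have hsum : ∑' n, μ {x | c n * μ (Qcube d n x) < μ (ball x ((2 : ℝ) ^ n)⁻¹)} ≠ ⊤ := by
    refine ne_top_of_le_ne_top ?_ (ENNReal.tsum_le_tsum fun n =>
      measure_setOf_mul_measure_Qcube_lt_measure_ball_le μ n (c n))
    rw [ENNReal.tsum_mul_right]
    finiteness
  filter_upwards [ae_eventually_notMem hsum] with x hx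
  exact hx.mono fun n hn => not_lt.1 hn

lemma ae_eventually_measure_ball_le [IsLocallyFiniteMeasure μ] {c : ℕ → ℝ≥0∞}
    (hc : ∑' n, (c n)⁻¹ ≠ ⊤) :
    ∀ᵐ x ∂μ, ∀ᶠ n in atTop, μ (ball x ((2 : ℝ) ^ n)⁻¹) ≤ c n * μ (Qcube d n x) := by
  suffices h : ∀ R : ℕ, ∀ᵐ x ∂μ.restrict (ball 0 R), ∀ᶠ n in atTop,
      μ (ball x ((2 : ℝ) ^ n)⁻¹) ≤ c n * μ (Qcube d n x) by
    simpa only [iUnion_ball_nat, Measure.restrict_univ] using (ae_restrict_iUnion_iff _ _).2 h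
  intro R
  have : IsFiniteMeasure (μ.restrict (ball 0 R)) :=
    isFiniteMeasure_restrict.2 measure_ball_lt_top.ne
  filter_upwards [ae_eventually_measure_ball_le_of_isFiniteMeasure (μ.restrict (ball 0 R)) hc,
    ae_restrict_mem measurableSet_ball] with x hx hxR
  obtain ⟨ε, hε, hεR⟩ := Metric.isOpen_iff.1 isOpen_ball x hxR
  have hradius : ∀ᶠ n : ℕ in atTop, ((2 : ℝ) ^ n)⁻¹ < ε :=
    (tendsto_pow_atTop_atTop_of_one_lt one_lt_two).inv_tendsto_atTop.eventually_lt_const hε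
  filter_upwards [hx, hradius] with n hn hnε
  calc μ (ball x ((2 : ℝ) ^ n)⁻¹)
      = μ.restrict (ball 0 R) (ball x ((2 : ℝ) ^ n)⁻¹) :=
        (Measure.restrict_eq_self μ ((ball_subset_ball hnε.le).trans hεR)).symm
    _ ≤ c n * μ.restrict (ball 0 R) (Qcube d n x) := hn
    _ ≤ c n * μ (Qcube d n x) := by gcongr; exact Measure.restrict_le_self

end CubesVersusBalls

section CubeExponent

variable {d : ℕ}

/-- `−log₂ μ(Q_n(x))`: the counterpart of `ballExponent` for the dyadic cubes around `x`. -/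
noncomputable def cubeExponent (μ : Measure (EuclideanSpace ℝ (Fin d)))
    (x : EuclideanSpace ℝ (Fin d)) (n : ℕ) : ℝ :=
  -Real.logb 2 (μ.real (Qcube d n x))

variable {μ : Measure (EuclideanSpace ℝ (Fin d))} [IsLocallyFiniteMeasure μ]
  {x : EuclideanSpace ℝ (Fin d)} {n : ℕ}

lemma measureReal_Qcube_pos (hQ : μ (Qcube d n x) ≠ 0) : 0 < μ.real (Qcube d n x) :=
  ENNReal.toReal_pos hQ (measure_lt_top_of_subset (Qcube_subset_ball n x) measure_ball_lt_top.ne).ne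

lemma ballExponent_le_cubeExponent_add (hQ : μ (Qcube d (n + d) x) ≠ 0) :
    ballExponent μ x n ≤ cubeExponent μ x (n + d) := by
  rw [ballExponent_natCast]
  exact neg_le_neg (Real.logb_le_logb_of_le one_lt_two (measureReal_Qcube_pos hQ)
    (measureReal_mono (Qcube_add_subset_ball n x) measure_ball_lt_top.ne))

lemma cubeExponent_le_ballExponent_add (hx : x ∈ μ.support) (hQ : μ (Qcube d n x) ≠ 0) {c : ℝ}
    (hc : 0 < c)
    (hball : μ (ball x ((2 : ℝ) ^ n)⁻¹) ≤ ENNReal.ofReal c * μ (Qcube d n x)) :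
    cubeExponent μ x n ≤ ballExponent μ x n + Real.logb 2 c := by
  have hQpos := measureReal_Qcube_pos hQ
  have hreal : μ.real (ball x ((2 : ℝ) ^ n)⁻¹) ≤ c * μ.real (Qcube d n x) := by
    have hQtop : μ (Qcube d n x) ≠ ⊤ := (ENNReal.toReal_pos_iff.1 hQpos).2.ne
    simpa only [measureReal_def, ENNReal.toReal_mul, ENNReal.toReal_ofReal hc.le] using
      ENNReal.toReal_mono (ENNReal.mul_ne_top ENNReal.ofReal_ne_top hQtop) hball
  have hlog := Real.logb_le_logb_of_le one_lt_two (measureReal_ball_pos hx (by positivity)) hreal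
  rw [Real.logb_mul hc.ne' hQpos.ne'] at hlog
  rw [ballExponent_natCast, cubeExponent]
  linarith

end CubeExponent

theorem stmt2_general (d : ℕ) (μ : Measure (EuclideanSpace ℝ (Fin d)))
    [IsLocallyFiniteMeasure μ] :
    ∀ᵐ x ∂μ,
      (Filter.limsup (fun n : ℕ =>
          ((-(Real.logb 2 (μ (Qcube d n x)).toReal) / n : ℝ) : EReal)) atTop
        = upperLocalDim μ x) ∧
      (Filter.liminf (fun n : ℕ =>
          ((-(Real.logb 2 (μ (Qcube d n x)).toReal) / n : ℝ) : EReal)) atTop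
        = lowerLocalDim μ x) := by
  filter_upwards [Measure.support_mem_ae, ae_measure_Qcube_ne_zero μ,
    ae_eventually_measure_ball_le μ tsum_inv_ofReal_natCast_add_one_sq_ne_top] with x hx hQ hball
  have hlower : ∀ᶠ n : ℕ in atTop, ballExponent μ x n ≤ cubeExponent μ x (n + d) :=
    .of_forall fun n => ballExponent_le_cubeExponent_add (hQ (n + d))
  have hupper : ∀ᶠ n : ℕ in atTop,
      cubeExponent μ x n ≤ ballExponent μ x n + Real.logb 2 (((n : ℝ) + 1) ^ 2) :=
    hball.mono fun n hn => cubeExponent_le_ballExponent_add hx (hQ n) (by positivity) hn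
  have herr := isLittleO_logb_natCast_add_one_sq 2
  rw [upperLocalDim_eq_limsup_ballExponent, lowerLocalDim_eq_liminf_ballExponent,
    ← limsup_div_natCast_eq_of_monotone (monotone_ballExponent hx),
    ← liminf_div_natCast_eq_of_monotone (monotone_ballExponent hx)]
  exact ⟨limsup_div_natCast_eq_of_le_add hlower hupper herr,
    liminf_div_natCast_eq_of_le_add hlower hupper herr⟩

/-- For a Borel probability measure `μ` on `[0,1)^d` giving zero mass to
the boundary of every dyadic cube, for `μ`-a.e. `x` the upper (resp. lower) dyadic local
dimension `limsup_n (−log₂ μ(Q_n(x)))/n` (resp. `liminf`) coincides with the usual upper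
(resp. lower) local dimension computed with balls. -/
theorem stmt2 (d : ℕ) (hd : 0 < d) (μ : Measure (EuclideanSpace ℝ (Fin d)))
    [IsProbabilityMeasure μ] (hsupp : μ (unitCube d) = 1)
    (hbd : ∀ Q, IsDyadicCube d Q → μ (frontier Q) = 0) :
    ∀ᵐ x ∂μ,
      (Filter.limsup (fun n : ℕ =>
          ((-(Real.logb 2 (μ (Qcube d n x)).toReal) / n : ℝ) : EReal)) atTop
        = upperLocalDim μ x) ∧
      (Filter.liminf (fun n : ℕ =>
          ((-(Real.logb 2 (μ (Qcube d n x)).toReal) / n : ℝ) : EReal)) atTop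
        = lowerLocalDim μ x) :=
  stmt2_general d μ
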